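/- Let K > 0 and μ > 0. Define S(C) = (K/2)(ln det C)·C⁻¹ − (μ/3)(det C)^{-1/3}(tr C)·C⁻¹ + μ(det C)^{-1/3}·I on real 3×3 matrices with positive determinant. Then for every real symmetric positive-definite 3×3 matrix C and every real symmetric 3×3 matrix H, the Fréchet derivative of S at C applied to H equals (1/2)·[ K·tr(C⁻¹H)·C⁻¹ − K·(ln det C)·C⁻¹HC⁻¹ + (2μ/3)(det C)^{-1/3}·( −tr(H)·C⁻¹ − tr(C⁻¹H)·I + (1/3)·tr(C)·tr(C⁻¹H)·C⁻¹ + tr(C)·C⁻¹HC⁻¹ ) ]. (This is the contraction (1/2)𝔻 : H of the material tangent 𝔻 = K C⁻¹⊗C⁻¹ − 2K ln J · 𝓘 + (2μ/3)J^{-2/3}(−I⊗C⁻¹ − C⁻¹⊗I + (1/3)tr(C) C⁻¹⊗C⁻¹ + tr(C) 𝓘) with J = √(det C) and 𝓘 : H = C⁻¹HC⁻¹ for symmetric H.) -/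

import Mathlib

attribute [local instance] Matrix.normedAddCommGroup Matrix.normedSpace

open Matrix in
theorem aux_inv (C : Matrix (Fin 3) (Fin 3) ℝ) (hC : IsUnit C) :
    ∃ L : Matrix (Fin 3) (Fin 3) ℝ →L[ℝ] Matrix (Fin 3) (Fin 3) ℝ,
      HasFDerivAt (fun X : Matrix (Fin 3) (Fin 3) ℝ => X⁻¹) L C ∧
        ∀ H, L H = -(C⁻¹ * H * C⁻¹) := by
  obtain ⟨u, rfl⟩ := hC
  have h := @hasFDerivAt_ringInverse ℝ _ (Matrix (Fin 3) (Fin 3) ℝ)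
    Matrix.linftyOpNormedRing
    (@instHasSummableGeomSeriesOfCompleteSpace _ Matrix.linftyOpNormedRing inferInstance)
    Matrix.linftyOpNormedAlgebra u
  have e : (fun X : Matrix (Fin 3) (Fin 3) ℝ => X⁻¹) = Ring.inverse := by
    funext X; exact Matrix.nonsing_inv_eq_ringInverse X
  rw [e]
  refine ⟨_, h, fun H => ?_⟩
  rw [← Matrix.coe_units_inv]
  rfl

theorem aux_det (C : Matrix (Fin 3) (Fin 3) ℝ) (hC : C.det ≠ 0) :
    ∃ L : Matrix (Fin 3) (Fin 3) ℝ →L[ℝ] ℝ,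
      HasFDerivAt (fun X : Matrix (Fin 3) (Fin 3) ℝ => X.det) L C ∧
        ∀ H, L H = C.det * (C⁻¹ * H).trace := by
  have he : ∀ i j, HasFDerivAt (fun X : Matrix (Fin 3) (Fin 3) ℝ => X i j)
      (LinearMap.toContinuousLinearMap (Matrix.entryLinearMap ℝ ℝ i j)) C := fun i j =>
    (LinearMap.toContinuousLinearMap (Matrix.entryLinearMap ℝ ℝ i j)).hasFDerivAt
  simp only [Matrix.det_fin_three]
  refine ⟨_, (((((((he 0 0).mul (he 1 1)).mul (he 2 2)).sub
    (((he 0 0).mul (he 1 2)).mul (he 2 1))).sub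
    (((he 0 1).mul (he 1 0)).mul (he 2 2))).add
    (((he 0 1).mul (he 1 2)).mul (he 2 0))).add
    (((he 0 2).mul (he 1 0)).mul (he 2 1))).sub
    (((he 0 2).mul (he 1 1)).mul (he 2 0)), fun H => ?_⟩
  rw [← Matrix.det_fin_three]
  have : C.det * (C⁻¹ * H).trace = (C.adjugate * H).trace := by
    rw [Matrix.inv_def, Ring.inverse_eq_inv', Matrix.smul_mul, Matrix.trace_smul, smul_eq_mul,
      mul_inv_cancel_left₀ hC]
  rw [this, Matrix.adjugate_fin_three]
  change (C 0 0 * C 1 1) * H 2 2 + C 2 2 * (C 0 0 * H 1 1 + C 1 1 * H 0 0)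
    - ((C 0 0 * C 1 2) * H 2 1 + C 2 1 * (C 0 0 * H 1 2 + C 1 2 * H 0 0))
    - ((C 0 1 * C 1 0) * H 2 2 + C 2 2 * (C 0 1 * H 1 0 + C 1 0 * H 0 1))
    + ((C 0 1 * C 1 2) * H 2 0 + C 2 0 * (C 0 1 * H 1 2 + C 1 2 * H 0 1))
    + ((C 0 2 * C 1 0) * H 2 1 + C 2 1 * (C 0 2 * H 1 0 + C 1 0 * H 0 2))
    - ((C 0 2 * C 1 1) * H 2 0 + C 2 0 * (C 0 2 * H 1 1 + C 1 1 * H 0 2)) = _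
  simp only [Matrix.trace_fin_three, Matrix.mul_apply, Fin.sum_univ_three]
  simp
  ring

/-- The material tangent of the compressible neo-Hookean second Piola–Kirchhoff stress:
for symmetric positive-definite `C` and symmetric `H`, the Fréchet derivative of
`S(C) = (K/2)(ln det C)C⁻¹ − (μ/3)(det C)^{-1/3}(tr C)C⁻¹ + μ(det C)^{-1/3}I` at `C`
applied to `H` equals `(1/2)𝔻 : H`. -/
theorem stmt2 (K μ : ℝ) (hK : 0 < K) (hμ : 0 < μ)
    (C H : Matrix (Fin 3) (Fin 3) ℝ) (hC : C.PosDef) (hH : H.IsSymm) :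
    fderiv ℝ
      (fun X : Matrix (Fin 3) (Fin 3) ℝ =>
        (K / 2 * Real.log X.det) • X⁻¹
          - (μ / 3 * X.det ^ (-(1 : ℝ) / 3) * X.trace) • X⁻¹
          + (μ * X.det ^ (-(1 : ℝ) / 3)) • (1 : Matrix (Fin 3) (Fin 3) ℝ)) C H =
      (1 / 2 : ℝ) •
        ((K * (C⁻¹ * H).trace) • C⁻¹
          - (K * Real.log C.det) • (C⁻¹ * H * C⁻¹)
          + (2 * μ / 3 * C.det ^ (-(1 : ℝ) / 3)) •
            (-(H.trace • C⁻¹) - ((C⁻¹ * H).trace • (1 : Matrix (Fin 3) (Fin 3) ℝ))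
              + (1 / 3 * C.trace * (C⁻¹ * H).trace) • C⁻¹
              + C.trace • (C⁻¹ * H * C⁻¹))) := by
  have hd : 0 < C.det := hC.det_pos
  obtain ⟨A, hA, hA'⟩ := aux_inv C hC.isUnit
  obtain ⟨D, hD, hD'⟩ := aux_det C hd.ne'
  have hT : HasFDerivAt (fun X : Matrix (Fin 3) (Fin 3) ℝ => X.trace)
      (LinearMap.toContinuousLinearMap (Matrix.traceLinearMap (Fin 3) ℝ ℝ)) C :=
    (LinearMap.toContinuousLinearMap (Matrix.traceLinearMap (Fin 3) ℝ ℝ)).hasFDerivAt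
  have hl := (hD.log hd.ne').const_mul (K / 2)
  have hp := hD.rpow_const (p := -(1 : ℝ) / 3) (Or.inl hd.ne')
  have h := ((hl.smul hA).sub (((hp.const_mul (μ / 3)).mul hT).smul hA)).add
    ((hp.const_mul μ).smul_const (1 : Matrix (Fin 3) (Fin 3) ℝ))
  have e : C.det ^ (-(1 : ℝ) / 3 - 1) = C.det ^ (-(1 : ℝ) / 3) * C.det⁻¹ := by
    rw [Real.rpow_sub_one hd.ne', div_eq_mul_inv]
  refine (congrArg (fun L => L H) h.fderiv).trans ?_
  have hn := hd.ne'
  change (K / 2 * Real.log C.det) • A H + (K / 2 * (C.det⁻¹ * D H)) • C⁻¹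
    - ((μ / 3 * C.det ^ (-(1 : ℝ) / 3) * C.trace) • A H
      + ((μ / 3 * C.det ^ (-(1 : ℝ) / 3)) * H.trace
        + C.trace * (μ / 3 * ((-(1 : ℝ) / 3 * C.det ^ (-(1 : ℝ) / 3 - 1)) * D H))) • C⁻¹)
    + (μ * ((-(1 : ℝ) / 3 * C.det ^ (-(1 : ℝ) / 3 - 1)) * D H)) •
      (1 : Matrix (Fin 3) (Fin 3) ℝ) = _
  rw [hA', hD', e]
  ext i j
  simp only [Matrix.add_apply, Matrix.sub_apply, Matrix.smul_apply, Matrix.neg_apply, smul_eq_mul]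
  generalize C.det ^ (-(1 : ℝ) / 3) = r
  field_simp
  ring
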